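/- arXiv:0712.2631 — 2 statements merged into one kernel-verified Lean document; each statement's English description precedes it below -/
import Mathlib

section
/- Let K ⊂ ℝ^{2n} be a convex body with 0 in its interior whose support function h_K and gauge function ‖·‖_K are both C¹ on ℝ^{2n}∖{0}. Let p > 1 and q = p/(p−1). Suppose z ∈ 𝓔_p satisfies the Euler equation ∇(h_K^p)(ż(t)) = (p/2)·λ·J z(t) + α for almost every t, where λ = ∫₀^{2π} h_K^p(ż(t)) dt > 0 and α ∈ ℝ^{2n}. Then the 2π-periodic curve l(t) := (2π/λ)^{1/q}·((λ/2)·J z(t) + α/p) satisfies: (i) l(t) ∈ ∂K for all t, i.e. h_{K°}(l(t)) = 1; (ii) there is a constant d > 0 with l̇(t) = d·J∇(h_{K°}^q)(l(t)), so l is a closed characteristic on ∂K; and (iii) its action satisfies 𝒜(l)^{p/2} = (1/2)·π^{p/q}·λ. -/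
open MeasureTheory Real Set Filter intervalIntegral Metric
open scoped InnerProductSpace Topology Pointwise

noncomputable section

/-- The phase space `ℝ^{2n}`. -/
abbrev E (n : ℕ) := EuclideanSpace ℝ (Fin (2 * n))

/-- The standard complex structure `J` on `ℝ^{2n}`, given in coordinates
`(x₁,y₁,…,xₙ,yₙ)` by `J(x₁,y₁,…,xₙ,yₙ) = (−y₁,x₁,…,−yₙ,xₙ)`. -/
def Jmap (n : ℕ) (v : E n) : E n := WithLp.toLp 2 fun i =>
  if _h : i.val % 2 = 0 then -v ⟨i.val + 1, by have := i.isLt; omega⟩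
  else v ⟨i.val - 1, by have := i.isLt; omega⟩

/-- The support function `h_K(u) = sup_{x ∈ K} ⟨x, u⟩`. -/
def suppFn (n : ℕ) (K : Set (E n)) (u : E n) : ℝ :=
  sSup ((fun x => ⟪x, u⟫_ℝ) '' K)

/-- A convex body: a compact convex set with nonempty interior. -/
def IsConvexBody (n : ℕ) (K : Set (E n)) : Prop :=
  IsCompact K ∧ Convex ℝ K ∧ (interior K).Nonempty

/-- Membership in the loop space `𝓔_p`: the pair `(z, dz)` represents an absolutely
continuous `2π`-periodic loop `z` with derivative `dz ∈ L^p([0,2π])`, mean zero and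
normalized action `(1/2)∫₀^{2π} ⟨J z, ż⟩ = 1`. -/
def InE (n : ℕ) (p : ℝ) (z dz : ℝ → E n) : Prop :=
  Function.Periodic z (2 * π) ∧
  (∀ a b : ℝ, IntervalIntegrable dz volume a b) ∧
  (∀ t, z t = z 0 + ∫ s in (0:ℝ)..t, dz s) ∧
  MemLp dz (ENNReal.ofReal p) (volume.restrict (Set.Ioc (0:ℝ) (2 * π))) ∧
  (∫ t in (0:ℝ)..(2 * π), z t) = 0 ∧
  (1 / 2) * ∫ t in (0:ℝ)..(2 * π), ⟪Jmap n (z t), dz t⟫_ℝ = 1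

/-- The (Ekeland–Hofer–Zehnder) capacity of a convex body,
`c(S) = (π · inf_{z ∈ 𝓔₂} (1/2π) ∫₀^{2π} h_S(ż(t)) dt)²`. -/
def capacity (n : ℕ) (S : Set (E n)) : ℝ :=
  (π * sInf { r : ℝ | ∃ z dz : ℝ → E n, InE n 2 z dz ∧
      r = (1 / (2 * π)) * ∫ t in (0:ℝ)..(2 * π), suppFn n S (dz t) }) ^ 2

/-- The action `𝒜(γ) = (1/2) ∫₀^{T₀} ⟨−Jγ̇(t), γ(t)⟩ dt` of a `T₀`-periodic curve. -/
def action (n : ℕ) (γ : ℝ → E n) (T₀ : ℝ) : ℝ :=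
  (1 / 2) * ∫ t in (0:ℝ)..T₀, ⟪-Jmap n (deriv γ t), γ t⟫_ℝ

/-- A closed characteristic on `∂K`: a nonconstant `T₀`-periodic `C¹` curve lying on
`∂K` satisfying `γ̇ = d·J∇F(γ)` for some `d > 0`, where `F = ‖·‖_K²`. -/
def IsClosedCharacteristic (n : ℕ) (K : Set (E n)) (γ : ℝ → E n) (T₀ : ℝ) : Prop :=
  0 < T₀ ∧ Function.Periodic γ T₀ ∧ ContDiff ℝ 1 γ ∧ (∃ s t, γ s ≠ γ t) ∧
  (∀ t, γ t ∈ frontier K) ∧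
  ∃ d : ℝ, 0 < d ∧ ∀ t, deriv γ t = d • Jmap n (gradient (fun x => gauge K x ^ 2) (γ t))

/-- A capacity carrier of `K`: a closed characteristic on `∂K` of minimal action. -/
def IsCapacityCarrier (n : ℕ) (K : Set (E n)) (γ : ℝ → E n) (T₀ : ℝ) : Prop :=
  IsClosedCharacteristic n K γ T₀ ∧
  ∀ γ' T₀', IsClosedCharacteristic n K γ' T₀' → action n γ T₀ ≤ action n γ' T₀'

/-- The minimal action of a closed characteristic on `∂K`. -/
def minAction (n : ℕ) (K : Set (E n)) : ℝ :=
  sInf { a : ℝ | ∃ γ T₀, IsClosedCharacteristic n K γ T₀ ∧ a = action n γ T₀ }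

/-- `K` has smooth boundary: its gauge function is `C¹` away from the origin. -/
def HasSmoothBoundary (n : ℕ) (K : Set (E n)) : Prop :=
  ContDiffOn ℝ 1 (gauge K) {(0 : E n)}ᶜ

/-- The `p`-sum `K +ₚ T` of Firey: the convex body with support function
`(h_K^p + h_T^p)^{1/p}`. -/
def pSum (n : ℕ) (p : ℝ) (K T : Set (E n)) : Set (E n) :=
  { x | ∀ u, ⟪x, u⟫_ℝ ≤ (suppFn n K u ^ p + suppFn n T u ^ p) ^ (1 / p) }

/-- The polar body `T° = {x : ⟨x,y⟩ ≤ 1 for all y ∈ T}`. -/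
def polarBody (n : ℕ) (T : Set (E n)) : Set (E n) :=
  { x | ∀ y ∈ T, ⟪x, y⟫_ℝ ≤ 1 }

/-- The length `∫₀^{T₀} ‖γ̇(t)‖_B dt` of a curve measured with the gauge of `B`. -/
def lengthIn (n : ℕ) (B : Set (E n)) (γ : ℝ → E n) (T₀ : ℝ) : ℝ :=
  ∫ t in (0:ℝ)..T₀, gauge B (deriv γ t)

/-- Critical point of the functional `I_p(z) = ∫₀^{2π} h_K^p(ż(t)) dt` on `𝓔_p`. -/
def IsCriticalPoint (n : ℕ) (p : ℝ) (K : Set (E n)) (z dz : ℝ → E n) : Prop :=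
  ∀ ξ dξ : ℝ → E n,
    Function.Periodic ξ (2 * π) →
    (∀ a b : ℝ, IntervalIntegrable dξ volume a b) →
    (∀ t, ξ t = ξ 0 + ∫ s in (0:ℝ)..t, dξ s) →
    MemLp dξ (ENNReal.ofReal p) (volume.restrict (Set.Ioc (0:ℝ) (2 * π))) →
    (∫ t in (0:ℝ)..(2 * π), ξ t) = 0 →
    (∫ t in (0:ℝ)..(2 * π), ⟪ξ t, Jmap n (dz t)⟫_ℝ) = 0 →
    (∫ t in (0:ℝ)..(2 * π), ⟪gradient (fun u => suppFn n K u ^ p) (dz t), dξ t⟫_ℝ) = 0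

/-- The rotation-invariant probability measure on the unit sphere of `ℝ^{2n}`. -/
def sphereMeasure (n : ℕ) : Measure (sphere (0 : E n) 1) :=
  ((volume : Measure (E n)).toSphere Set.univ)⁻¹ • (volume : Measure (E n)).toSphere

/-- The mean width parameter `M*(K) = ∫_{S^{2n-1}} h_K dσ`. -/
def meanWidth (n : ℕ) (K : Set (E n)) : ℝ :=
  ∫ x : sphere (0 : E n) 1, suppFn n K (x : E n) ∂(sphereMeasure n)

/-- `J` as a linear map. -/
def Jlin (n : ℕ) : E n →ₗ[ℝ] E n where
  toFun := Jmap n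
  map_add' u v := by
    ext i
    by_cases h : i.val % 2 = 0 <;> simp [Jmap, h] <;> ring
  map_smul' c v := by
    ext i
    by_cases h : i.val % 2 = 0 <;> simp [Jmap, h]

/-- `J` as a continuous linear map. -/
def Jc (n : ℕ) : E n →L[ℝ] E n := LinearMap.toContinuousLinearMap (Jlin n)

lemma Jc_apply (n : ℕ) (v : E n) : Jc n v = Jmap n v := rfl

lemma Jmap_Jmap (n : ℕ) (v : E n) : Jmap n (Jmap n v) = -v := by
  ext i
  by_cases h : i.val % 2 = 0
  · have h1 : (i.val + 1) % 2 ≠ 0 := by omega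
    simp [Jmap, h, h1]
  · have h1 : (i.val - 1) % 2 = 0 := by omega
    have h2 : i.val - 1 + 1 = i.val := by omega
    simp [Jmap, h, h1, h2]

lemma inner_Jmap_self (n : ℕ) (v : E n) : ⟪v, Jmap n v⟫_ℝ = 0 := by
  rw [PiLp.inner_apply]
  refine Finset.sum_involution
    (fun i _ => if h : i.val % 2 = 0 then ⟨i.val + 1, by have := i.isLt; omega⟩
      else ⟨i.val - 1, by have := i.isLt; omega⟩) ?_ ?_ ?_ ?_
  · intro i _
    by_cases h : i.val % 2 = 0
    · have h1 : (i.val + 1) % 2 ≠ 0 := by omega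
      simp [Jmap, h, h1]; ring
    · have h1 : (i.val - 1) % 2 = 0 := by omega
      have h2 : i.val - 1 + 1 = i.val := by omega
      simp [Jmap, h, h1, h2]; ring
  · intro i _ _ hc
    have := congrArg Fin.val hc
    by_cases h : i.val % 2 = 0
    · simp [h] at this
    · simp [h] at this; omega
  · intro i _; exact Finset.mem_univ _
  · intro i _
    apply Fin.ext
    by_cases h : i.val % 2 = 0
    · have h1 : (i.val + 1) % 2 ≠ 0 := by omega
      simp [h, h1]
    · have h1 : (i.val - 1) % 2 = 0 := by omega
      simp [h, h1]; omega

lemma rpow_hasFDerivAt_zero {V : Type*} [NormedAddCommGroup V] [NormedSpace ℝ V]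
    (f : V → ℝ) (C : ℝ) (hC : 0 ≤ C) (hf0 : ∀ x, 0 ≤ f x) (hfC : ∀ x, f x ≤ C * ‖x‖)
    (r : ℝ) (hr : 1 < r) :
    HasFDerivAt (fun x => f x ^ r) (0 : V →L[ℝ] ℝ) 0 := by
  have f00 : f 0 = 0 := le_antisymm (by simpa using hfC 0) (hf0 0)
  rw [hasFDerivAt_iff_isLittleO_nhds_zero]
  have hr0 : r ≠ 0 := by linarith
  simp only [zero_add, f00, Real.zero_rpow hr0, sub_zero, ContinuousLinearMap.zero_apply]
  rw [Asymptotics.isLittleO_iff]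
  intro c hc
  have ht : Tendsto (fun x : V => C ^ r * ‖x‖ ^ (r - 1)) (𝓝 0) (𝓝 (C ^ r * ‖(0 : V)‖ ^ (r - 1))) := by
    apply Tendsto.const_mul
    exact (continuous_norm.tendsto _).rpow_const (Or.inr (by linarith))
  rw [norm_zero, Real.zero_rpow (by linarith), mul_zero] at ht
  filter_upwards [ht.eventually_lt_const hc] with x hx
  rw [Real.norm_of_nonneg (Real.rpow_nonneg (hf0 x) r)]
  calc f x ^ r ≤ (C * ‖x‖) ^ r := Real.rpow_le_rpow (hf0 x) (hfC x) (by linarith)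
    _ = C ^ r * ‖x‖ ^ r := Real.mul_rpow hC (norm_nonneg _)
    _ = C ^ r * ‖x‖ ^ (r - 1) * ‖x‖ := by
      rw [mul_assoc]; congr 1
      rcases eq_or_ne ‖x‖ 0 with h | h
      · rw [h, Real.zero_rpow hr0, mul_zero]
      · rw [← Real.rpow_add_one h]; congr 1; ring
    _ ≤ c * ‖x‖ := by gcongr

lemma differentiableAt_of_cd {V : Type*} [NormedAddCommGroup V] [NormedSpace ℝ V]
    (f : V → ℝ) (hcd : ContDiffOn ℝ 1 f {(0 : V)}ᶜ) (x : V) (hx : x ≠ 0) :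
    DifferentiableAt ℝ f x :=
  (hcd.contDiffAt (isOpen_compl_singleton.mem_nhds hx)).differentiableAt (by norm_num)

lemma rpow_differentiable {V : Type*} [NormedAddCommGroup V] [NormedSpace ℝ V]
    (f : V → ℝ) (hcd : ContDiffOn ℝ 1 f {(0 : V)}ᶜ)
    (C : ℝ) (hC : 0 ≤ C) (hf0 : ∀ x, 0 ≤ f x) (hfC : ∀ x, f x ≤ C * ‖x‖)
    (r : ℝ) (hr : 1 < r) : Differentiable ℝ (fun x => f x ^ r) := by
  intro x
  rcases eq_or_ne x 0 with rfl | hx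
  · exact (rpow_hasFDerivAt_zero f C hC hf0 hfC r hr).differentiableAt
  · exact (differentiableAt_of_cd f hcd x hx).rpow_const (Or.inr hr.le)

lemma rpow_continuous_fderiv {V : Type*} [NormedAddCommGroup V] [NormedSpace ℝ V]
    (f : V → ℝ) (hcd : ContDiffOn ℝ 1 f {(0 : V)}ᶜ)
    (C : NNReal) (hL : LipschitzWith C f) (hf0 : ∀ x, 0 ≤ f x) (hfC : ∀ x, f x ≤ C * ‖x‖)
    (r : ℝ) (hr : 1 < r) : Continuous (fderiv ℝ (fun x => f x ^ r)) := by
  have f00 : f 0 = 0 := le_antisymm (by simpa using hfC 0) (hf0 0)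
  have hform : ∀ x, x ≠ 0 → fderiv ℝ (fun x => f x ^ r) x
      = (r * f x ^ (r - 1)) • fderiv ℝ f x := by
    intro x hx
    exact ((differentiableAt_of_cd f hcd x hx).hasFDerivAt.rpow_const (Or.inr hr.le)).fderiv
  have hz : fderiv ℝ (fun x => f x ^ r) 0 = 0 :=
    (rpow_hasFDerivAt_zero f C C.2 hf0 hfC r hr).fderiv
  rw [continuous_iff_continuousAt]
  intro x
  rcases eq_or_ne x 0 with rfl | hx
  · rw [ContinuousAt, hz]
    have ht : Tendsto (fun x : V => r * f x ^ (r - 1) * C) (𝓝 0) (𝓝 (r * f 0 ^ (r - 1) * C)) := by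
      apply Tendsto.mul_const
      apply Tendsto.const_mul
      exact (hL.continuous.tendsto _).rpow_const (Or.inr (by linarith))
    rw [f00, Real.zero_rpow (by linarith), mul_zero, zero_mul] at ht
    refine squeeze_zero_norm (fun y => ?_) ht
    have hnn : 0 ≤ r * f y ^ (r - 1) :=
      mul_nonneg (by linarith) (Real.rpow_nonneg (hf0 y) _)
    rcases eq_or_ne y 0 with rfl | hy
    · rw [hz, norm_zero]; exact mul_nonneg hnn C.2
    · rw [hform y hy, norm_smul, Real.norm_of_nonneg hnn]
      gcongr
      exact norm_fderiv_le_of_lipschitz ℝ hL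
  · have h1 : ContinuousAt (fun x => (r * f x ^ (r - 1)) • fderiv ℝ f x) x := by
      have ha : ContinuousAt (fun x => r * f x ^ (r - 1)) x := continuousAt_const.mul
          ((hL.continuous.continuousAt).rpow_const (Or.inr (by linarith)))
      have hb : ContinuousAt (fderiv ℝ f) x :=
        (hcd.continuousOn_fderiv_of_isOpen isOpen_compl_singleton le_rfl).continuousAt
          (isOpen_compl_singleton.mem_nhds hx)
      exact ha.smul hb
    refine h1.congr ?_
    filter_upwards [isOpen_compl_singleton.mem_nhds hx] with y hy
    exact (hform y hy).symm

section body
variable {n : ℕ} {K : Set (E n)}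

lemma supp_bdd (hK : IsCompact K) (u : E n) : BddAbove ((fun x => ⟪x, u⟫_ℝ) '' K) :=
  (hK.image (by fun_prop)).bddAbove

lemma inner_le_supp (hK : IsCompact K) (u x : E n) (hx : x ∈ K) : ⟪x, u⟫_ℝ ≤ suppFn n K u :=
  le_csSup (supp_bdd hK u) ⟨x, hx, rfl⟩

lemma exists_supp (hK : IsCompact K) (hne : K.Nonempty) (u : E n) :
    ∃ x ∈ K, ⟪x, u⟫_ℝ = suppFn n K u := by
  have := (hK.image (f := fun x => ⟪x, u⟫_ℝ) (by fun_prop)).sSup_mem (hne.image _)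
  exact this

lemma supp_nonneg (hK : IsCompact K) (h0 : (0 : E n) ∈ K) (u : E n) : 0 ≤ suppFn n K u := by
  simpa using inner_le_supp hK u 0 h0

lemma supp_le (hK : IsCompact K) (hne : K.Nonempty) :
    ∃ C : ℝ, 0 ≤ C ∧ ∀ u, suppFn n K u ≤ C * ‖u‖ := by
  obtain ⟨C, hC⟩ := hK.isBounded.exists_norm_le
  refine ⟨C, ?_, fun u => ?_⟩
  · obtain ⟨x, hx⟩ := hne
    exact (norm_nonneg x).trans (hC x hx)
  · obtain ⟨x, hx, h⟩ := exists_supp hK hne u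
    rw [← h]
    exact (real_inner_le_norm x u).trans (by gcongr; exact hC x hx)

lemma inner_le_gauge_supp (hK : IsCompact K) (hc : Convex ℝ K) (h0 : K ∈ 𝓝 (0 : E n))
    (x u : E n) : ⟪x, u⟫_ℝ ≤ gauge K x * suppFn n K u := by
  have hb : Bornology.IsVonNBounded ℝ K := NormedSpace.isVonNBounded_of_isBounded ℝ hK.isBounded
  have habs : Absorbent ℝ K := absorbent_nhds_zero h0
  rcases eq_or_ne x 0 with rfl | hx
  · simp
  · have hg : 0 < gauge K x := (gauge_pos habs hb).2 hx
    have hmem : (gauge K x)⁻¹ • x ∈ K := by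
      have h1 : gauge K ((gauge K x)⁻¹ • x) ≤ 1 := by
        rw [gauge_smul_of_nonneg (inv_nonneg.2 hg.le), smul_eq_mul, inv_mul_cancel₀ hg.ne']
      have := (gauge_le_one_iff_mem_closure hc h0).1 h1
      rwa [hK.isClosed.closure_eq] at this
    have := inner_le_supp hK u _ hmem
    rw [real_inner_smul_left, inv_mul_le_iff₀ hg] at this
    exact this

/-- Legendre duality between `h_K^p/p` and `‖·‖_K^q/q`. -/
lemma legendre (hK : IsCompact K) (hc : Convex ℝ K) (h0 : K ∈ 𝓝 (0 : E n))
    (p q : ℝ) (hpq : p.HolderConjugate q)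
    (hd : Differentiable ℝ (fun u => suppFn n K u ^ p))
    (hdg : Differentiable ℝ (fun u => gauge K u ^ q)) (u m : E n)
    (hm : gradient (fun u => suppFn n K u ^ p) u = p • m) :
    gauge K m ^ q = suppFn n K u ^ p ∧ ⟪m, u⟫_ℝ = suppFn n K u ^ p ∧
    gradient (fun x => gauge K x ^ q) m = q • u := by
  have h0K : (0 : E n) ∈ K := mem_of_mem_nhds h0
  have hp0 : p ≠ 0 := hpq.ne_zero
  have hq0 : q ≠ 0 := hpq.symm.ne_zero
  have young : ∀ x v, ⟪x, v⟫_ℝ ≤ gauge K x ^ q / q + suppFn n K v ^ p / p := fun x v =>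
    (inner_le_gauge_supp hK hc h0 x v).trans
      (Real.young_inequality_of_nonneg (gauge_nonneg _) (supp_nonneg hK h0K v) hpq.symm)
  obtain ⟨x, hxK, hx⟩ := exists_supp hK ⟨0, h0K⟩ u
  set s := suppFn n K u with hs
  have hs0 : 0 ≤ s := supp_nonneg hK h0K u
  set m' := s ^ (p - 1) • x with hm'
  have hin : ⟪m', u⟫_ℝ = s ^ p := by
    rw [hm', real_inner_smul_left, hx]
    rcases hs0.eq_or_lt with h | h
    · rw [← h, mul_zero, Real.zero_rpow hp0]
    · rw [← Real.rpow_add_one h.ne']; congr 1; ring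
  have hgm : gauge K m' ^ q ≤ s ^ p := by
    have h1 : gauge K m' ≤ s ^ (p - 1) := by
      rw [hm', gauge_smul_of_nonneg (Real.rpow_nonneg hs0 _), smul_eq_mul]
      exact mul_le_of_le_one_right (Real.rpow_nonneg hs0 _) (gauge_le_one_of_mem hxK)
    calc gauge K m' ^ q ≤ (s ^ (p - 1)) ^ q :=
          Real.rpow_le_rpow (gauge_nonneg _) h1 hpq.symm.nonneg
      _ = s ^ p := by rw [← Real.rpow_mul hs0, hpq.sub_one_mul_conj]
  have hsum : s ^ p = s ^ p / q + s ^ p / p := by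
    have := hpq.symm.inv_add_inv_eq_one
    rw [div_eq_mul_inv, div_eq_mul_inv, ← mul_add, this, mul_one]
  have hge := young m' u
  rw [hin, ← hs] at hge
  have hqpos : 0 < q := hpq.symm.pos
  have hgm2 : gauge K m' ^ q = s ^ p := by
    apply le_antisymm hgm
    have : s ^ p / q ≤ gauge K m' ^ q / q := by linarith
    exact (div_le_div_iff_of_pos_right hqpos).1 this
  -- gradient of the support power
  have hgrad1 : gradient (fun u => suppFn n K u ^ p) u = p • m' := by
    have hmin : IsLocalMin (fun v => suppFn n K v ^ p - p * ⟪m', v⟫_ℝ) u := by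
      refine Filter.Eventually.of_forall fun v => ?_
      have h1 := young m' v
      have hppos : 0 < p := hpq.pos
      have h2 : p * ⟪m', v⟫_ℝ ≤ p * (gauge K m' ^ q / q) + suppFn n K v ^ p := by
        calc p * ⟪m', v⟫_ℝ ≤ p * (gauge K m' ^ q / q + suppFn n K v ^ p / p) := by gcongr
          _ = _ := by field_simp
      have h3 : p * s ^ p = p * (s ^ p / q) + s ^ p := by
        calc p * s ^ p = p * (s ^ p / q + s ^ p / p) := by rw [← hsum]
          _ = _ := by field_simp
      simp only [hin, ← hs]
      rw [hgm2] at h2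
      linarith
    have hD : HasFDerivAt (fun v => suppFn n K v ^ p - p * ⟪m', v⟫_ℝ)
        (fderiv ℝ (fun u => suppFn n K u ^ p) u - p • innerSL ℝ m') u :=
      (hd u).hasFDerivAt.sub ((innerSL ℝ m').hasFDerivAt.const_mul p)
    have hz := hmin.hasFDerivAt_eq_zero hD
    rw [sub_eq_zero] at hz
    apply ext_inner_right ℝ
    intro v
    rw [gradient, InnerProductSpace.toDual_symm_apply, hz, real_inner_smul_left]
    simp
  have hgrad2 : gradient (fun u => gauge K u ^ q) m' = q • u := by
    have hmin : IsLocalMin (fun v => gauge K v ^ q - q * ⟪u, v⟫_ℝ) m' := by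
      refine Filter.Eventually.of_forall fun v => ?_
      have h1 := young v u
      have h2 : q * ⟪u, v⟫_ℝ ≤ gauge K v ^ q + q * (s ^ p / p) := by
        rw [real_inner_comm]
        calc q * ⟪v, u⟫_ℝ ≤ q * (gauge K v ^ q / q + s ^ p / p) := by gcongr
          _ = _ := by field_simp
      have h3 : q * s ^ p = s ^ p + q * (s ^ p / p) := by
        calc q * s ^ p = q * (s ^ p / q + s ^ p / p) := by rw [← hsum]
          _ = _ := by field_simp
      simp only [real_inner_comm m' u, hin, hgm2]
      linarith
    have hD : HasFDerivAt (fun v => gauge K v ^ q - q * ⟪u, v⟫_ℝ)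
        (fderiv ℝ (fun u => gauge K u ^ q) m' - q • innerSL ℝ u) m' :=
      (hdg m').hasFDerivAt.sub ((innerSL ℝ u).hasFDerivAt.const_mul q)
    have hz := hmin.hasFDerivAt_eq_zero hD
    rw [sub_eq_zero] at hz
    apply ext_inner_right ℝ
    intro v
    rw [gradient, InnerProductSpace.toDual_symm_apply, hz, real_inner_smul_left]
    simp
  have hmm : m = m' := by
    have := hm.symm.trans hgrad1
    exact smul_right_injective _ hp0 this
  rw [hmm]
  exact ⟨hgm2, hin, hgrad2⟩

lemma gradient_homog (q : ℝ) (hdg : Differentiable ℝ (fun u => gauge K u ^ q))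
    (k : ℝ) (hk : 0 < k) (x : E n) :
    gradient (fun u => gauge K u ^ q) (k • x) = k ^ (q - 1) • gradient (fun u => gauge K u ^ q) x := by
  have h1 : HasFDerivAt (fun y => gauge K (k • y) ^ q)
      ((fderiv ℝ (fun u => gauge K u ^ q) (k • x)).comp (k • ContinuousLinearMap.id ℝ (E n))) x :=
    HasFDerivAt.comp (g := fun u => gauge K u ^ q) x (hdg (k • x)).hasFDerivAt ((hasFDerivAt_id x).const_smul k)
  have h2 : HasFDerivAt (fun y => gauge K (k • y) ^ q)
      (k ^ q • fderiv ℝ (fun u => gauge K u ^ q) x) x := by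
    have : (fun y => gauge K (k • y) ^ q) = fun y => k ^ q * gauge K y ^ q := by
      funext y
      rw [gauge_smul_of_nonneg hk.le, smul_eq_mul, Real.mul_rpow hk.le (gauge_nonneg _)]
    rw [this]
    exact (hdg x).hasFDerivAt.const_mul _
  have h3 := h1.unique h2
  apply ext_inner_right ℝ
  intro v
  rw [real_inner_smul_left, gradient, gradient, InnerProductSpace.toDual_symm_apply,
    InnerProductSpace.toDual_symm_apply]
  have h4 := congrArg (fun L : E n →L[ℝ] ℝ => L v) h3
  simp at h4
  rw [Real.rpow_sub_one hk.ne']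
  field_simp
  linarith

end body

/-- From a solution `z ∈ 𝓔_p` of the Euler equation, the affine image
`l(t) = (2π/λ)^{1/q}·((λ/2)·Jz(t) + α/p)` lies on `∂K`, is a closed characteristic
(for the Hamiltonian `h_{K°}^q = ‖·‖_K^q`), and `𝒜(l)^{p/2} = (1/2)·π^{p/q}·λ`. -/
theorem euler_solution_gives_characteristic (n : ℕ) (K : Set (E n)) (hK : IsConvexBody n K)
    (h0 : (0 : E n) ∈ interior K)
    (hsupp : ContDiffOn ℝ 1 (suppFn n K) {(0 : E n)}ᶜ)
    (hgauge : ContDiffOn ℝ 1 (gauge K) {(0 : E n)}ᶜ)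
    (p q : ℝ) (hp : 1 < p) (hq : q = p / (p - 1))
    (z dz : ℝ → E n) (hz : InE n p z dz)
    (lam : ℝ) (hlam : lam = ∫ t in (0:ℝ)..(2 * π), suppFn n K (dz t) ^ p)
    (hlampos : 0 < lam) (α : E n)
    (heuler : ∀ᵐ t ∂(volume.restrict (Set.Ioc (0:ℝ) (2 * π))),
      gradient (fun u => suppFn n K u ^ p) (dz t) = (p / 2 * lam) • Jmap n (z t) + α)
    (l : ℝ → E n)
    (hl : ∀ t, l t = ((2 * π / lam) ^ (1 / q)) • ((lam / 2) • Jmap n (z t) + (1 / p) • α)) :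
    (∀ t, gauge K (l t) = 1 ∧ l t ∈ frontier K) ∧
    (∃ d : ℝ, 0 < d ∧
      ∀ t, deriv l t = d • Jmap n (gradient (fun x => gauge K x ^ q) (l t))) ∧
    action n l (2 * π) ^ (p / 2) = 1 / 2 * π ^ (p / q) * lam := by
  obtain ⟨hKc, hKconv, -⟩ := hK
  obtain ⟨hper, hint, hprim, -, -, -⟩ := hz
  have h0n : K ∈ 𝓝 (0 : E n) := mem_interior_iff_mem_nhds.1 h0
  have h0K : (0 : E n) ∈ K := interior_subset h0
  have hpq : p.HolderConjugate q := by
    rw [hq]; exact Real.HolderConjugate.conjExponent hp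
  have hq1 : 1 < q := hpq.symm.lt
  have hq0 : 0 < q := hpq.symm.pos
  have hp0 : 0 < p := hpq.pos
  -- regularity of the powers
  obtain ⟨C, hC0, hC⟩ := supp_le hKc ⟨0, h0K⟩
  have hd : Differentiable ℝ (fun u => suppFn n K u ^ p) :=
    rpow_differentiable _ hsupp C hC0 (supp_nonneg hKc h0K) hC p hp
  obtain ⟨C', hL⟩ : ∃ C' : NNReal, LipschitzWith C' (gauge K) :=
    hKconv.lipschitz_gauge h0n
  have hgC : ∀ x, gauge K x ≤ C' * ‖x‖ := by
    intro x
    have := hL.dist_le_mul x 0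
    rw [gauge_zero, dist_zero_right, dist_zero_right, Real.norm_of_nonneg (gauge_nonneg _)] at this
    exact this
  have hdg : Differentiable ℝ (fun x => gauge K x ^ q) :=
    rpow_differentiable _ hgauge C' C'.2 gauge_nonneg hgC q hq1
  have hcg : Continuous (gradient (fun x => gauge K x ^ q)) := by
    unfold gradient
    exact (InnerProductSpace.toDual ℝ (E n)).symm.continuous.comp
      (rpow_continuous_fderiv _ hgauge C' hL gauge_nonneg hgC q hq1)
  -- the curve `m`
  set m : ℝ → E n := fun t => (lam / 2) • Jmap n (z t) + (1 / p) • α with hm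
  set G : ℝ → E n := fun t => q⁻¹ • gradient (fun x => gauge K x ^ q) (m t) with hG
  have hzc : Continuous z := by
    have : z = fun t => z 0 + ∫ s in (0:ℝ)..t, dz s := funext hprim
    rw [this]
    exact continuous_const.add (intervalIntegral.continuous_primitive hint 0)
  have hmc : Continuous m := by
    have : Continuous fun t => Jmap n (z t) := (Jc n).continuous.comp hzc
    exact (this.const_smul (lam / 2)).add continuous_const
  have hGc : Continuous G := (hcg.comp hmc).const_smul q⁻¹
  have hae : ∀ᵐ t ∂(volume.restrict (Set.Ioc (0:ℝ) (2 * π))),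
      gauge K (m t) ^ q = suppFn n K (dz t) ^ p ∧ ⟪m t, dz t⟫_ℝ = suppFn n K (dz t) ^ p ∧
      dz t = G t := by
    filter_upwards [heuler] with t ht
    have h1 : gradient (fun u => suppFn n K u ^ p) (dz t) = p • m t := by
      rw [ht, hm]
      simp only [smul_add, smul_smul]
      congr 2
      · ring
      · rw [mul_one_div_cancel hp0.ne', one_smul]
    obtain ⟨ha, hb, hc⟩ := legendre hKc hKconv h0n p q hpq hd hdg (dz t) (m t) h1
    refine ⟨ha, hb, ?_⟩
    rw [hG]
    simp only [hc, smul_smul]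
    rw [inv_mul_cancel₀ hq0.ne', one_smul]
  have hpi : (0:ℝ) < 2 * π := by positivity
  have hae' : ∀ᵐ t ∂volume, t ∈ Set.Ioc (0:ℝ) (2 * π) →
      gauge K (m t) ^ q = suppFn n K (dz t) ^ p ∧ ⟪m t, dz t⟫_ℝ = suppFn n K (dz t) ^ p ∧
      dz t = G t := (ae_restrict_iff' measurableSet_Ioc).1 hae
  have hmper : Function.Periodic m (2 * π) := fun t => by simp only [hm, hper t]
  have hGper : Function.Periodic G (2 * π) := fun t => by simp only [hG, hmper t]
  have hzG0 : ∀ t ∈ Set.Icc (0:ℝ) (2 * π), z t = z 0 + ∫ s in (0:ℝ)..t, G s := by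
    intro t ht
    rw [hprim t]
    congr 1
    apply intervalIntegral.integral_congr_ae
    filter_upwards [hae'] with s hs hs'
    rw [uIoc_of_le ht.1] at hs'
    exact (hs ⟨hs'.1, hs'.2.trans ht.2⟩).2.2
  have hGint0 : ∫ s in (0:ℝ)..(2 * π), G s = 0 := by
    have h1 := hzG0 (2 * π) ⟨hpi.le, le_rfl⟩
    have h2 : z (2 * π) = z 0 := by simpa using hper 0
    rw [h2] at h1
    simpa using h1
  have hzG : ∀ t, z t = z 0 + ∫ s in (0:ℝ)..t, G s := by
    have hp1 : Function.Periodic (fun t => z t - (z 0 + ∫ s in (0:ℝ)..t, G s)) (2 * π) := by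
      intro t
      have h1 : ∫ s in (0:ℝ)..(t + 2 * π), G s = ∫ s in (0:ℝ)..t, G s := by
        rw [← intervalIntegral.integral_add_adjacent_intervals
          (hGc.intervalIntegrable 0 t) (hGc.intervalIntegrable t (t + 2 * π)),
          hGper.intervalIntegral_add_eq t 0, zero_add, hGint0, add_zero]
      simp only [hper t, h1]
    intro t
    obtain ⟨y, hy, hty⟩ := hp1.exists_mem_Ico₀ hpi t
    have h2 := hzG0 y ⟨hy.1, hy.2.le⟩
    rw [← sub_eq_zero, hty, sub_eq_zero]
    exact h2
  have hzd : ∀ t, HasDerivAt z (G t) t := by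
    intro t
    have h1 : HasDerivAt (fun t => z 0 + ∫ s in (0:ℝ)..t, G s) (G t) t :=
      (intervalIntegral.integral_hasDerivAt_right (hGc.intervalIntegrable 0 t)
        hGc.aestronglyMeasurable.stronglyMeasurableAtFilter hGc.continuousAt).const_add _
    exact h1.congr_of_eventuallyEq (Filter.Eventually.of_forall hzG)
  have hmd : ∀ t, HasDerivAt m ((lam / 2) • Jmap n (G t)) t := by
    intro t
    have h1 : HasDerivAt (fun t => Jmap n (z t)) (Jmap n (G t)) t :=
      (Jc n).hasFDerivAt.comp_hasDerivAt t (hzd t)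
    exact (h1.const_smul (lam / 2)).add_const _
  -- conservation of energy
  have hcons : ∀ t, gauge K (m t) ^ q = gauge K (m 0) ^ q := by
    have hD : ∀ t, HasDerivAt (fun t => gauge K (m t) ^ q) 0 t := by
      intro t
      have h1 : HasDerivAt (fun t => gauge K (m t) ^ q)
          (fderiv ℝ (fun x => gauge K x ^ q) (m t) ((lam / 2) • Jmap n (G t))) t :=
        HasFDerivAt.comp_hasDerivAt (l := fun x => gauge K x ^ q) t
          (hdg (m t)).hasFDerivAt (hmd t)
      have h2 : fderiv ℝ (fun x => gauge K x ^ q) (m t) ((lam / 2) • Jmap n (G t)) = 0 := by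
        have h3 : gradient (fun x => gauge K x ^ q) (m t) = q • G t := by
          simp only [hG, smul_smul]
          rw [mul_inv_cancel₀ hq0.ne', one_smul]
        rw [← InnerProductSpace.toDual_symm_apply]
        change ⟪gradient (fun x => gauge K x ^ q) (m t), _⟫_ℝ = 0
        rw [h3, real_inner_smul_left, real_inner_smul_right, inner_Jmap_self]
        simp
      rwa [h2] at h1
    intro t
    exact is_const_of_deriv_eq_zero (fun t => (hD t).differentiableAt) (fun t => (hD t).deriv) t 0
  have hlam2 : lam = 2 * π * gauge K (m 0) ^ q := by
    rw [hlam]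
    have : ∫ t in (0:ℝ)..(2 * π), suppFn n K (dz t) ^ p
        = ∫ t in (0:ℝ)..(2 * π), gauge K (m 0) ^ q := by
      apply intervalIntegral.integral_congr_ae
      filter_upwards [hae'] with s hs hs'
      rw [uIoc_of_le hpi.le] at hs'
      rw [← (hs hs').1, hcons s]
    rw [this]
    simp
  have hgq : ∀ t, gauge K (m t) ^ q = lam / (2 * π) := by
    intro t
    rw [hcons t, eq_div_iff hpi.ne']
    linarith
  set k : ℝ := (2 * π / lam) ^ (1 / q) with hk
  have hbase : 0 < 2 * π / lam := by positivity
  have hkpos : 0 < k := Real.rpow_pos_of_pos hbase _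
  have hlm : ∀ t, l t = k • m t := hl
  have hld : ∀ t, HasDerivAt l (k • (lam / 2) • Jmap n (G t)) t := by
    intro t
    have : l = fun t => k • m t := funext hlm
    rw [this]
    exact (hmd t).const_smul k
  have hg1 : ∀ t, gauge K (l t) = 1 := by
    intro t
    have h1 : gauge K (m t) = (lam / (2 * π)) ^ (1 / q) := by
      rw [← hgq t, ← Real.rpow_mul (gauge_nonneg _), mul_one_div_cancel hq0.ne', Real.rpow_one]
    rw [hlm t, gauge_smul_of_nonneg hkpos.le, smul_eq_mul, h1, hk,
      ← Real.mul_rpow hbase.le (by positivity)]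
    have : 2 * π / lam * (lam / (2 * π)) = 1 := by field_simp
    rw [this, Real.one_rpow]
  refine ⟨fun t => ⟨hg1 t, (gauge_eq_one_iff_mem_frontier hKconv h0n).1 (hg1 t)⟩, ?_, ?_⟩
  · refine ⟨k * (lam / 2) * q⁻¹ * (k ^ (q - 1))⁻¹, by positivity, fun t => ?_⟩
    have hkq : k ^ (q - 1) ≠ 0 := (Real.rpow_pos_of_pos hkpos _).ne'
    rw [(hld t).deriv, hlm t, gradient_homog q hdg k hkpos (m t)]
    simp only [hG, ← Jc_apply, map_smul, smul_smul]
    congr 1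
    field_simp
  · have hact : action n l (2 * π) = (k * lam / 2) ^ 2 := by
      have h1 : ∫ t in (0:ℝ)..(2 * π), ⟪-Jmap n (deriv l t), l t⟫_ℝ
          = ∫ t in (0:ℝ)..(2 * π), k ^ 2 * (lam / 2) * (lam / (2 * π)) := by
        apply intervalIntegral.integral_congr_ae
        filter_upwards [hae'] with s hs hs'
        rw [uIoc_of_le hpi.le] at hs'
        obtain ⟨ha, hb, hc⟩ := hs hs'
        have h2 : -Jmap n (deriv l s) = (k * (lam / 2)) • G s := by
          rw [(hld s).deriv, smul_smul, ← Jc_apply, map_smul, Jc_apply, Jmap_Jmap, smul_neg,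
            neg_neg]
        rw [h2, hlm s, real_inner_smul_left, real_inner_smul_right, real_inner_comm, ← hc, hb, ← ha,
          hgq s]
        ring
      unfold action
      rw [h1]
      simp
      field_simp
    have hpq1 : p / q = p - 1 := hpq.div_conj_eq_sub_one
    have hk' : k ^ p = (2 * π / lam) ^ (p - 1) := by
      rw [hk, ← Real.rpow_mul hbase.le, ← hpq1]
      congr 1
      ring
    rw [hact, ← Real.rpow_natCast, ← Real.rpow_mul (by positivity), hpq1]
    have h2 : ((2 : ℕ) : ℝ) * (p / 2) = p := by push_cast; ring
    rw [h2, mul_div_assoc, Real.mul_rpow hkpos.le (by positivity), hk',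
      Real.rpow_sub_one (by positivity), Real.rpow_sub_one Real.pi_pos.ne',
      Real.div_rpow hpi.le hlampos.le, Real.mul_rpow (by norm_num) Real.pi_pos.le,
      Real.div_rpow hlampos.le (by norm_num)]
    have e1 : lam ^ p ≠ 0 := (Real.rpow_pos_of_pos hlampos _).ne'
    have e2 : (2:ℝ) ^ p ≠ 0 := (Real.rpow_pos_of_pos (by norm_num) _).ne'
    field_simp
end
end

section
/- Let K ⊂ ℝ^{2n} be a convex body with 0 in its interior and smooth boundary, and let T ⊂ ℝ^{2n} be a convex body with 0 in its interior. Then for any capacity carrier γ of K, with period T₀, one has 4·c(K)·c(T) ≤ (length_{JT°}(γ))², where length_{JT°}(γ) = ∫₀^{T₀} ‖γ̇(t)‖_{JT°} dt, ‖x‖_{JT°} = inf{r > 0 : x ∈ r·JT°}, and JT° = {Jy : y ∈ T°}. -/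
open MeasureTheory Real Set Filter intervalIntegral Metric
open scoped InnerProductSpace Topology Pointwise

noncomputable section

/-- `J` as a linear map. -/
def JL (n : ℕ) : E n →ₗ[ℝ] E n where
  toFun := Jmap n
  map_add' x y := by
    ext i
    simp only [Jmap, PiLp.add_apply]
    split_ifs <;> ring
  map_smul' c x := by
    ext i
    simp only [Jmap, PiLp.smul_apply, smul_eq_mul, RingHom.id_apply]
    split_ifs <;> ring

/-- `J` as a continuous linear map. -/
def JC (n : ℕ) : E n →L[ℝ] E n := LinearMap.toContinuousLinearMap (JL n)

lemma JC_apply (n : ℕ) (x : E n) : Jmap n x = JC n x := rfl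

lemma JC_JC (n : ℕ) (x : E n) : JC n (JC n x) = -x := by
  rw [← JC_apply, ← JC_apply]
  ext i
  simp only [Jmap, PiLp.neg_apply]
  by_cases h : i.val % 2 = 0
  · have h2 : ¬ ((i.val + 1) % 2 = 0) := by omega
    simp [h, h2]
  · have h2 : ((i.val - 1) % 2 = 0) := by omega
    have h3 : i.val - 1 + 1 = i.val := by omega
    simp [h, h2, h3]

lemma suppFn_bdd {n : ℕ} {S : Set (E n)} (hS : IsCompact S) (u : E n) :
    BddAbove ((fun x => ⟪x, u⟫_ℝ) '' S) :=
  (hS.image (by fun_prop)).bddAbove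

lemma suppFn_nonneg {n : ℕ} {S : Set (E n)} (hS : IsCompact S) (h0 : (0 : E n) ∈ S) (u : E n) :
    0 ≤ suppFn n S u :=
  le_csSup (suppFn_bdd hS u) ⟨0, h0, by simp⟩

lemma suppFn_smul {n : ℕ} (S : Set (E n)) {c : ℝ} (hc : 0 ≤ c) (u : E n) :
    suppFn n S (c • u) = c * suppFn n S u := by
  unfold suppFn
  have h := Real.sSup_smul_of_nonneg hc ((fun x : E n => ⟪x, u⟫_ℝ) '' S)
  rw [smul_eq_mul] at h
  refine Eq.trans ?_ h
  congr 1
  ext r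
  simp [Set.mem_smul_set, inner_smul_right]

lemma gauge_J_polar {n : ℕ} {S : Set (E n)} (hS : IsCompact S) (h0 : (0 : E n) ∈ S) (x : E n) :
    gauge (Jmap n '' polarBody n S) x = suppFn n S (-(JC n x)) := by
  have key : ∀ r : ℝ, suppFn n S (-(JC n x)) < r →
      gauge (Jmap n '' polarBody n S) x ≤ r ∧ 0 < r ∧ x ∈ r • (Jmap n '' polarBody n S) := by
    intro r hr
    have hr0 : 0 < r := lt_of_le_of_lt (suppFn_nonneg hS h0 _) hr
    have hx : x ∈ r • (Jmap n '' polarBody n S) := by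
      refine ⟨r⁻¹ • x, ⟨r⁻¹ • (-(JC n x)), ?_, ?_⟩, ?_⟩
      · intro y hy
        have h1 : ⟪y, -(JC n x)⟫_ℝ ≤ r :=
          (le_csSup (suppFn_bdd hS _) ⟨y, hy, rfl⟩).trans hr.le
        rw [real_inner_smul_left, real_inner_comm, inv_mul_le_iff₀ hr0]
        linarith
      · rw [JC_apply, map_smul, map_neg, JC_JC, neg_neg]
      · simp [smul_smul, hr0.ne']
    exact ⟨gauge_le_of_mem hr0.le hx, hr0, hx⟩
  apply le_antisymm
  · exact le_of_forall_gt_imp_ge_of_dense (fun r hr => (key r hr).1)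
  · unfold gauge
    apply le_csInf
    · exact ⟨_, (key (suppFn n S (-(JC n x)) + 1) (by linarith)).2⟩
    · rintro r ⟨hr0, _, ⟨y, hy, rfl⟩, rfl⟩
      apply csSup_le (Set.Nonempty.image _ ⟨0, h0⟩)
      rintro _ ⟨w, hw, rfl⟩
      have h1 := hy w hw
      simp only [JC_apply, map_smul, JC_JC, smul_neg, neg_neg]
      rw [inner_smul_right, real_inner_comm]
      nlinarith

/-- Capacity is bounded by the length of any loop with positive action. -/
lemma capacity_le_of_loop {n : ℕ} {S : Set (E n)} (hS : IsCompact S) (h0 : (0 : E n) ∈ S)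
    {γ : ℝ → E n} {T₀ : ℝ} (hT₀ : 0 < T₀) (hper : Function.Periodic γ T₀)
    (hγ : ContDiff ℝ 1 γ) (hA : 0 < action n γ T₀) :
    4 * action n γ T₀ * capacity n S ≤ (∫ t in (0:ℝ)..T₀, suppFn n S (-(JC n (deriv γ t)))) ^ 2 := by
  set A := action n γ T₀ with hAdef
  set L := ∫ t in (0:ℝ)..T₀, suppFn n S (-(JC n (deriv γ t))) with hL
  have hpi := Real.pi_pos
  set k : ℝ := T₀ / (2 * π) with hk
  have hk0 : 0 < k := by positivity
  have hkT : k * (2 * π) = T₀ := by rw [hk]; field_simp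
  set c : ℝ := (√A)⁻¹ with hc
  have hc0 : 0 < c := by positivity
  have hcA : c * c * A = 1 := by
    have := Real.mul_self_sqrt hA.le
    rw [hc]; field_simp; nlinarith
  have hdγ : ∀ t, HasDerivAt γ (deriv γ t) t := fun t =>
    (hγ.differentiable one_ne_zero t).hasDerivAt
  have hcd : Continuous (deriv γ) := hγ.continuous_deriv le_rfl
  have hcγ : Continuous γ := hγ.continuous
  set w : ℝ → E n := fun t => c • (-(JC n (γ (k * t)))) with hw
  set dw : ℝ → E n := fun t => (c * k) • (-(JC n (deriv γ (k * t)))) with hdw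
  have hwc : Continuous w := by rw [hw]; fun_prop
  have hdwc : Continuous dw := by rw [hdw]; fun_prop
  have hwd : ∀ t, HasDerivAt w (dw t) t := by
    intro t
    have h1 : HasDerivAt (fun t : ℝ => k * t) k t := by
      simpa using (hasDerivAt_id t).const_mul k
    have h2 : HasDerivAt (fun t => γ (k * t)) (k • deriv γ (k * t)) t :=
      (hdγ (k * t)).scomp t h1
    have h3 := (((JC n).hasFDerivAt.comp_hasDerivAt t h2).neg).const_smul c
    have h4 : c • (-(JC n (k • deriv γ (k * t)))) = dw t := by
      simp [hdw, smul_smul]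
    exact h4 ▸ h3
  have hwper : Function.Periodic w (2 * π) := by
    intro t
    simp only [hw]
    rw [mul_add, hkT, hper]
  have hFTC : ∀ t, ∫ s in (0:ℝ)..t, dw s = w t - w 0 := fun t =>
    intervalIntegral.integral_eq_sub_of_hasDerivAt (fun s _ => hwd s)
      (hdwc.intervalIntegrable _ _)
  set m : E n := (1 / (2 * π)) • ∫ t in (0:ℝ)..(2 * π), w t with hm
  have hInE : InE n 2 (fun t => w t - m) dw := by
    refine ⟨fun t => by simp [hwper t], fun a b => hdwc.intervalIntegrable _ _, ?_, ?_, ?_, ?_⟩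
    · intro t; rw [hFTC]; module
    · refine MemLp.mono_measure (Measure.restrict_mono Ioc_subset_Icc_self le_rfl) ?_
      obtain ⟨C, hC⟩ := isCompact_Icc.exists_bound_of_continuousOn
        (hdwc.continuousOn (s := Icc 0 (2 * π)))
      refine MemLp.of_bound hdwc.aestronglyMeasurable C ?_
      exact (ae_restrict_iff' measurableSet_Icc).2 (Eventually.of_forall hC)
    · rw [intervalIntegral.integral_sub (hwc.intervalIntegrable _ _) (by simp)]
      simp only [intervalIntegral.integral_const, sub_zero, hm, smul_smul]
      rw [mul_one_div_cancel (by positivity), one_smul, sub_self]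
    · have e1 : ∀ t, ⟪Jmap n (w t - m), dw t⟫_ℝ =
          (c * c * k) * ⟪-(JC n (deriv γ (k * t))), γ (k * t)⟫_ℝ - ⟪JC n m, dw t⟫_ℝ := by
        intro t
        rw [JC_apply, map_sub, inner_sub_left]
        congr 1
        simp only [hw, hdw, map_smul, map_neg, JC_JC, neg_neg]
        rw [real_inner_smul_left, inner_smul_right, real_inner_comm]
        ring
      simp only [e1]
      rw [intervalIntegral.integral_sub]
      · have e2 : ∫ t in (0:ℝ)..(2 * π), ⟪JC n m, dw t⟫_ℝ = 0 := by
          have := (innerSL ℝ (JC n m)).intervalIntegral_comp_comm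
            (hdwc.intervalIntegrable (μ := volume) 0 (2 * π))
          simp only [innerSL_apply_apply] at this
          rw [this, hFTC]
          have := hwper 0
          rw [zero_add] at this
          simp [this]
        rw [e2, intervalIntegral.integral_const_mul,
          intervalIntegral.integral_comp_mul_left
            (fun t => ⟪-(JC n (deriv γ t)), γ t⟫_ℝ) hk0.ne', mul_zero, hkT, smul_eq_mul]
        have e3 : A = (1 / 2) * ∫ t in (0:ℝ)..T₀, ⟪-(JC n (deriv γ t)), γ t⟫_ℝ := rfl
        have e4 : ∫ t in (0:ℝ)..T₀, ⟪-(JC n (deriv γ t)), γ t⟫_ℝ = 2 * A := by linarith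
        rw [e4]
        field_simp
        linarith
      · apply Continuous.intervalIntegrable; fun_prop
      · apply Continuous.intervalIntegrable; fun_prop
  have hval : ∫ t in (0:ℝ)..(2 * π), suppFn n S (dw t) = c * L := by
    simp only [hdw, suppFn_smul S (mul_pos hc0 hk0).le]
    rw [intervalIntegral.integral_const_mul,
          intervalIntegral.integral_comp_mul_left
            (fun t => suppFn n S (-(JC n (deriv γ t)))) hk0.ne', mul_zero, hkT, smul_eq_mul]
    field_simp
    rw [hL]
  set R := { r : ℝ | ∃ z dz : ℝ → E n, InE n 2 z dz ∧
      r = (1 / (2 * π)) * ∫ t in (0:ℝ)..(2 * π), suppFn n S (dz t) } with hR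
  have hRnn : ∀ r ∈ R, 0 ≤ r := by
    rintro r ⟨z, dz, _, rfl⟩
    apply mul_nonneg (by positivity)
    exact intervalIntegral.integral_nonneg (by positivity) (fun t _ => suppFn_nonneg hS h0 _)
  have h1 : sInf R ≤ (1 / (2 * π)) * (c * L) :=
    csInf_le ⟨0, fun r hr => hRnn r hr⟩ ⟨_, _, hInE, by rw [hval]⟩
  have h2 : 0 ≤ sInf R := Real.sInf_nonneg hRnn
  have h3 : π * sInf R ≤ c * L / 2 := by
    calc π * sInf R ≤ π * ((1 / (2 * π)) * (c * L)) := by gcongr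
      _ = c * L / 2 := by field_simp
  have h4 : capacity n S ≤ (c * L / 2) ^ 2 :=
    pow_le_pow_left₀ (by positivity) h3 2
  calc 4 * A * capacity n S ≤ 4 * A * (c * L / 2) ^ 2 := by gcongr
    _ = (c * c * A) * L ^ 2 := by ring
    _ = L ^ 2 := by rw [hcA, one_mul]

lemma inner_gradient_gauge_sq {n : ℕ} {K : Set (E n)} (hK : IsConvexBody n K)
    (h0 : (0 : E n) ∈ interior K) (hKs : HasSmoothBoundary n K) {x : E n} (hx : x ∈ frontier K) :
    (∀ y ∈ K, ⟪y, gradient (fun x => gauge K x ^ 2) x⟫_ℝ ≤ 2) ∧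
      ⟪x, gradient (fun x => gauge K x ^ 2) x⟫_ℝ = 2 := by
  obtain ⟨hc, hconv, -⟩ := hK
  have hnhds : K ∈ 𝓝 (0 : E n) := mem_interior_iff_mem_nhds.mp h0
  have habs : Absorbent ℝ K := absorbent_nhds_zero hnhds
  have hg1 : gauge K x = 1 := (gauge_eq_one_iff_mem_frontier hconv hnhds).2 hx
  have hx0 : x ≠ 0 := by
    rintro rfl
    simp at hg1
  have hdg : DifferentiableAt ℝ (gauge K) x :=
    ((hKs x hx0).differentiableWithinAt one_ne_zero).differentiableAt
      (isOpen_compl_singleton.mem_nhds hx0)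
  have hdF : DifferentiableAt ℝ (fun x => gauge K x ^ 2) x := hdg.pow 2
  have hline : ∀ y : E n, HasDerivAt (fun s : ℝ => gauge K (x + s • y) ^ 2)
      ⟪y, gradient (fun x => gauge K x ^ 2) x⟫_ℝ 0 := by
    intro y
    have h1 := hdF.hasGradientAt.hasFDerivAt
    have h2 : HasDerivAt (fun s : ℝ => x + s • y) y 0 := by
      simpa using ((hasDerivAt_id (0:ℝ)).smul_const y).const_add x
    have h1' : HasFDerivAt (fun x => gauge K x ^ 2)
        (InnerProductSpace.toDual ℝ (E n) (gradient (fun x => gauge K x ^ 2) x))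
        (x + (0:ℝ) • y) := by simpa using h1
    have h3 := HasFDerivAt.comp_hasDerivAt (f := fun s : ℝ => x + s • y) 0 h1' h2
    rw [real_inner_comm]
    exact h3
  have hsq : HasDerivAt (fun s : ℝ => (1 + s) ^ 2) 2 0 := by
    have := ((hasDerivAt_id (0:ℝ)).const_add 1).pow 2
    have e : ((2:ℕ):ℝ) * (1 + id (0:ℝ)) ^ (2 - 1) * 1 = 2 := by norm_num
    exact e ▸ this
  constructor
  · intro y hy
    have hφ := (hline y).sub hsq
    by_contra! hcon
    have hpos : 0 < ⟪y, gradient (fun x => gauge K x ^ 2) x⟫_ℝ - 2 := by linarith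
    have hle : ⟪y, gradient (fun x => gauge K x ^ 2) x⟫_ℝ - 2 ≤ 0 := by
      have ht := (hasDerivAt_iff_tendsto_slope_zero.1 hφ).mono_left
        (nhdsGT_le_nhdsNE (0:ℝ))
      refine le_of_tendsto ht ?_
      filter_upwards [self_mem_nhdsWithin] with s hs
      have hs : 0 < s := hs
      have h1 : gauge K (x + s • y) ≤ 1 + s := by
        calc gauge K (x + s • y) ≤ gauge K x + gauge K (s • y) := gauge_add_le hconv habs _ _
          _ = 1 + s * gauge K y := by rw [hg1, gauge_smul_of_nonneg hs.le, smul_eq_mul]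
          _ ≤ 1 + s := by nlinarith [gauge_le_one_of_mem hy]
      have h2 : gauge K (x + s • y) ^ 2 ≤ (1 + s) ^ 2 := pow_le_pow_left₀ (gauge_nonneg _) h1 2
      simp only [smul_eq_mul, Pi.sub_apply, zero_add, zero_smul, add_zero, hg1]
      apply mul_nonpos_of_nonneg_of_nonpos (by positivity)
      linarith
    linarith
  · have h1 := hline x
    refine h1.unique (hsq.congr_of_eventuallyEq ?_)
    filter_upwards [lt_mem_nhds (show (-1:ℝ) < 0 by norm_num)] with s hs
    have : x + s • x = (1 + s) • x := by rw [add_smul, one_smul]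
    rw [this, gauge_smul_of_nonneg (by linarith), hg1, smul_eq_mul, mul_one]

/-- **Isoperimetric-type inequality for capacities:** for any capacity carrier `γ` of `K`,
`4·c(K)·c(T) ≤ (length_{JT°}(γ))²`. -/
theorem four_capacity_mul_le_length_sq (n : ℕ) (K T : Set (E n))
    (hK : IsConvexBody n K) (h0K : (0 : E n) ∈ interior K) (hKs : HasSmoothBoundary n K)
    (hT : IsConvexBody n T) (h0T : (0 : E n) ∈ interior T)
    (γ : ℝ → E n) (T₀ : ℝ) (hγ : IsCapacityCarrier n K γ T₀) :
    4 * capacity n K * capacity n T ≤ (lengthIn n (Jmap n '' polarBody n T) γ T₀) ^ 2 := by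
  obtain ⟨⟨hT₀, hper, hC, -, hfr, d, hd, hode⟩, -⟩ := hγ
  have hg := fun t => inner_gradient_gauge_sq hK h0K hKs (hfr t)
  have hJ : ∀ t, -(JC n (deriv γ t)) = d • gradient (fun x => gauge K x ^ 2) (γ t) := by
    intro t
    rw [hode, map_smul, JC_apply, JC_JC, smul_neg, neg_neg]
  have hA : action n γ T₀ = d * T₀ := by
    have : ∀ t, ⟪-Jmap n (deriv γ t), γ t⟫_ℝ = d * 2 := by
      intro t
      rw [JC_apply, hJ, real_inner_smul_left, real_inner_comm, (hg t).2]
    unfold action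
    simp only [this, intervalIntegral.integral_const, smul_eq_mul]
    ring
  have hA0 : 0 < action n γ T₀ := by rw [hA]; positivity
  have hsupp : ∀ t, suppFn n K (-(JC n (deriv γ t))) = d * 2 := by
    intro t
    rw [hJ, suppFn_smul K hd.le]
    congr 1
    have hmem : γ t ∈ K := hK.1.isClosed.frontier_subset (hfr t)
    apply le_antisymm
    · apply csSup_le (Set.Nonempty.image _ ⟨_, hmem⟩)
      rintro _ ⟨y, hy, rfl⟩
      exact (hg t).1 y hy
    · exact le_csSup (suppFn_bdd hK.1 _) ⟨_, hmem, (hg t).2⟩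
  have hcK := capacity_le_of_loop hK.1 (interior_subset h0K) hT₀ hper hC hA0
  have hcT := capacity_le_of_loop hT.1 (interior_subset h0T) hT₀ hper hC hA0
  simp only [hsupp, intervalIntegral.integral_const, smul_eq_mul] at hcK
  have hKA : capacity n K ≤ action n γ T₀ := by
    have : 4 * action n γ T₀ * capacity n K ≤ 4 * action n γ T₀ * action n γ T₀ := by
      refine hcK.trans (le_of_eq ?_)
      rw [hA]; ring
    exact le_of_mul_le_mul_left this (by positivity)
  have hT0 : 0 ≤ capacity n T := sq_nonneg _
  unfold lengthIn
  simp only [gauge_J_polar hT.1 (interior_subset h0T)]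
  refine le_trans ?_ hcT
  gcongr
end
end
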